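/- arXiv:2502.14252 — 3 statements merged into one kernel-verified Lean document; each statement's English description precedes it below -/
import Mathlib

section
/- Let α : ℝ → ℝ be differentiable and strictly positive, let ε : ℝ → E be continuous (E a real Banach space), and let x : ℝ → E be differentiable on [s,t] (s < t) satisfying for all λ ∈ [s,t] the diffusion ODE in the log-SNR variable: x'(λ) = (α'(λ)/α(λ)) • x(λ) − (α(λ) · exp(−λ)) • ε(λ). Then the rescaled solution satisfies the exact exponential-integrator identity (1/α(t)) • x(t) = (1/α(s)) • x(s) − ∫_{s}^{t} exp(−λ) • ε(λ) dλ. -/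
open MeasureTheory intervalIntegral

/-! Since `α'/α` is the logarithmic derivative of `α`, dividing by `α` removes the linear term of
the equation: by the quotient rule `(α⁻¹ • x)' = α⁻¹ • (x' - (α'/α) • x) = -e^{-λ} • ε`, where
the right-hand side no longer involves `x` and can be integrated. -/

theorem hasDerivWithinAt_inv_smul {𝕜 𝕜' F : Type*} [NontriviallyNormedField 𝕜]
    [NontriviallyNormedField 𝕜'] [NormedAlgebra 𝕜 𝕜'] [NormedAddCommGroup F] [NormedSpace 𝕜 F]
    [NormedSpace 𝕜' F] [IsScalarTower 𝕜 𝕜' F] {a : 𝕜 → 𝕜'} {a' : 𝕜'} {f : 𝕜 → F} {f' : F}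
    {S : Set 𝕜} {u : 𝕜} (ha : HasDerivWithinAt a a' S u) (hf : HasDerivWithinAt f f' S u)
    (hau : a u ≠ 0) :
    HasDerivWithinAt (fun v => (a v)⁻¹ • f v) ((a u)⁻¹ • (f' - (a' / a u) • f u)) S u := by
  refine ((ha.fun_inv hau).fun_smul hf).congr_deriv ?_
  have inv_deriv : -a' / a u ^ 2 = -((a u)⁻¹ * (a' / a u)) := by
    field_simp
  rw [inv_deriv, neg_smul, mul_smul, smul_sub, ← sub_eq_add_neg]

section IntervalIntegral

variable {E : Type*} [NormedAddCommGroup E] [NormedSpace ℝ E] [CompleteSpace E] {s t : ℝ}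

theorem integral_eq_sub_of_hasDerivWithinAt {f f' : ℝ → E}
    (hderiv : ∀ u ∈ Set.uIcc s t, HasDerivWithinAt f (f' u) (Set.uIcc s t) u)
    (hint : IntervalIntegrable f' volume s t) :
    ∫ u in s..t, f' u = f t - f s := by
  refine integral_eq_sub_of_hasDeriv_right (HasDerivWithinAt.continuousOn hderiv)
    (fun u hu => ?_) hint
  exact ((hderiv u (Set.Ioo_subset_Icc_self hu)).hasDerivAt
    (Icc_mem_nhds hu.1 hu.2)).hasDerivWithinAt

theorem inv_smul_sub_inv_smul_eq_integral_of_hasDerivWithinAt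
    {𝕜 : Type*} [NontriviallyNormedField 𝕜] [NormedAlgebra ℝ 𝕜] [NormedSpace 𝕜 E]
    [IsScalarTower ℝ 𝕜 E] {a a' : ℝ → 𝕜} {g x : ℝ → E}
    (ha : ∀ u ∈ Set.uIcc s t, HasDerivWithinAt a (a' u) (Set.uIcc s t) u)
    (ha₀ : ∀ u ∈ Set.uIcc s t, a u ≠ 0)
    (hx : ∀ u ∈ Set.uIcc s t,
      HasDerivWithinAt x ((a' u / a u) • x u + a u • g u) (Set.uIcc s t) u)
    (hg : IntervalIntegrable g volume s t) :
    (a t)⁻¹ • x t - (a s)⁻¹ • x s = ∫ u in s..t, g u := by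
  have hderiv : ∀ u ∈ Set.uIcc s t,
      HasDerivWithinAt (fun v => (a v)⁻¹ • x v) (g u) (Set.uIcc s t) u := by
    intro u hu
    simpa only [add_sub_cancel_left, inv_smul_smul₀ (ha₀ u hu)] using
      hasDerivWithinAt_inv_smul (ha u hu) (hx u hu) (ha₀ u hu)
  exact (integral_eq_sub_of_hasDerivWithinAt hderiv hg).symm

theorem dpm_exact_solution_formula_general {α α' : ℝ → ℝ} {ε x : ℝ → E}
    (hα : ∀ lam ∈ Set.uIcc s t, HasDerivWithinAt α (α' lam) (Set.uIcc s t) lam)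
    (hα₀ : ∀ lam ∈ Set.uIcc s t, α lam ≠ 0) (hε : IntervalIntegrable ε volume s t)
    (hx : ∀ lam ∈ Set.uIcc s t,
      HasDerivWithinAt x ((α' lam / α lam) • x lam - (α lam * Real.exp (-lam)) • ε lam)
        (Set.uIcc s t) lam) :
    (1 / α t) • x t = (1 / α s) • x s - ∫ lam in s..t, Real.exp (-lam) • ε lam := by
  have hint : IntervalIntegrable (fun lam => -(Real.exp (-lam) • ε lam)) volume s t :=
    (hε.continuousOn_smul (by fun_prop)).neg
  have hx' : ∀ lam ∈ Set.uIcc s t, HasDerivWithinAt x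
      ((α' lam / α lam) • x lam + α lam • -(Real.exp (-lam) • ε lam)) (Set.uIcc s t) lam := by
    simpa only [smul_neg, smul_smul, ← sub_eq_add_neg] using hx
  have increment :=
    inv_smul_sub_inv_smul_eq_integral_of_hasDerivWithinAt hα hα₀ hx' hint
  rw [intervalIntegral.integral_neg, sub_eq_iff_eq_add'] at increment
  rwa [one_div, one_div, sub_eq_add_neg]

end IntervalIntegral

/-- Exact exponential-integrator solution formula for the diffusion probability-flow ODE
in the log-SNR variable: if `x' λ = (α' λ / α λ) • x λ - (α λ * e^{-λ}) • ε λ` on `[s, t]`,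
then `(1/α t) • x t = (1/α s) • x s - ∫ λ in s..t, e^{-λ} • ε λ`. -/
theorem dpm_exact_solution_formula
    {E : Type*} [NormedAddCommGroup E] [NormedSpace ℝ E] [CompleteSpace E]
    (α : ℝ → ℝ) (hα : Differentiable ℝ α) (hαpos : ∀ lam, 0 < α lam)
    (ε : ℝ → E) (hε : Continuous ε)
    (x : ℝ → E) (s t : ℝ) (hst : s < t)
    (hx : ∀ lam ∈ Set.Icc s t,
      HasDerivAt x ((deriv α lam / α lam) • x lam
        - (α lam * Real.exp (-lam)) • ε lam) lam) :
    (1 / α t) • x t = (1 / α s) • x s - ∫ lam in s..t, Real.exp (-lam) • ε lam := by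
  rw [← Set.uIcc_of_le hst.le] at hx
  exact dpm_exact_solution_formula_general (fun lam _ => (hα lam).hasDerivAt.hasDerivWithinAt)
    (fun lam _ => (hαpos lam).ne') (hε.intervalIntegrable s t)
    (fun lam hlam => (hx lam hlam).hasDerivWithinAt)
end

section
/- Let E be a real Banach space, k ≥ 1, a ∈ ℝ, h > 0, and let ε : ℝ → E be k-times continuously differentiable on [a, a+h] with ‖ε^{(k)}(λ)‖ ≤ M for all λ ∈ [a, a+h]. Then ‖∫_{a}^{a+h} e^{−λ} ε(λ) dλ − Σ_{n=0}^{k−1} (∫_{a}^{a+h} e^{−λ} (λ−a)^n/n! dλ) • ε^{(n)}(a)‖ ≤ e^{−a} · M · h^{k+1} / (k+1)!. -/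
open MeasureTheory intervalIntegral Finset

/-!
The error equals `∫ w • (f - p)` for the Taylor polynomial `p` of `f` at `a`, so it suffices to
integrate the pointwise Taylor–Lagrange remainder. The mean value theorem only yields the remainder
`C (x - a)ⁿ⁺¹ / n!`; the factor `1 / (n + 1)!` comes from comparing `t ↦ p_t(x)`, where `p_t` is the
Taylor polynomial at `t`, with `t ↦ C ((x - a)ⁿ⁺¹ - (x - t)ⁿ⁺¹) / (n + 1)!`.
-/

section TaylorRemainder

variable {E : Type*} [NormedAddCommGroup E] [NormedSpace ℝ E] {f : ℝ → E} {a b C x : ℝ} {n : ℕ}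

theorem continuous_taylorWithinEval (f : ℝ → E) (n : ℕ) (s : Set ℝ) (c : ℝ) :
    Continuous (taylorWithinEval f n s c) := by
  simp only [funext (taylor_within_apply f n s c)]
  fun_prop

theorem hasDerivAt_const_sub_pow_succ_div_factorial (n : ℕ) (x t : ℝ) :
    HasDerivAt (fun y ↦ (x - y) ^ (n + 1) / ((n + 1).factorial : ℝ))
      (-((x - t) ^ n / (n.factorial : ℝ))) t := by
  refine ((monomial_has_deriv_aux t x n).div_const _).congr_deriv ?_
  rw [Nat.factorial_succ]
  push_cast
  field_simp

theorem hasDerivWithinAt_Ici_taylorWithinEval {t : ℝ} (x : ℝ) (ht : t ∈ Set.Ico a b)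
    (hf : ContDiffOn ℝ n f (Set.Icc a b))
    (hf' : DifferentiableWithinAt ℝ (iteratedDerivWithin n f (Set.Icc a b)) (Set.Ico a b) t) :
    HasDerivWithinAt (fun y ↦ taylorWithinEval f n (Set.Icc a b) y x)
      (((n.factorial : ℝ)⁻¹ * (x - t) ^ n) • iteratedDerivWithin (n + 1) f (Set.Icc a b) t)
      (Set.Ici t) t := by
  have Ico_mem : Set.Ico a b ∈ nhdsWithin t (Set.Icc a b) := by
    filter_upwards [self_mem_nhdsWithin, nhdsWithin_le_nhds (Iio_mem_nhds ht.2)]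
      with y hy hyb using ⟨hy.1, hyb⟩
  have deriv_Ico := hasDerivWithinAt_taylorWithinEval (x := x)
    (uniqueDiffOn_Icc (ht.1.trans_lt ht.2)) Ico_mem ht Set.Ico_subset_Icc_self hf
    (hf'.mono_of_mem_nhdsWithin Ico_mem)
  exact deriv_Ico.mono_of_mem_nhdsWithin (Ico_mem_nhdsGE_of_mem ht)

theorem norm_sub_taylorWithinEval_le (hf : ContDiffOn ℝ n f (Set.Icc a b))
    (hf' : DifferentiableOn ℝ (iteratedDerivWithin n f (Set.Icc a b)) (Set.Ico a b))
    (hC : ∀ t ∈ Set.Ico a b, ‖iteratedDerivWithin (n + 1) f (Set.Icc a b) t‖ ≤ C)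
    (hx : x ∈ Set.Icc a b) :
    ‖f x - taylorWithinEval f n (Set.Icc a b) a x‖
      ≤ C * ((x - a) ^ (n + 1) / ((n + 1).factorial : ℝ)) := by
  rcases hx.1.eq_or_lt with rfl | hax
  · simp
  have unique_diff : UniqueDiffOn ℝ (Set.Icc a b) := uniqueDiffOn_Icc (hax.trans_le hx.2)
  have mem_Ico {t : ℝ} (ht : t ∈ Set.Ico a x) : t ∈ Set.Ico a b := ⟨ht.1, ht.2.trans_le hx.2⟩
  have taylor_continuousOn :
      ContinuousOn (fun t ↦ taylorWithinEval f n (Set.Icc a b) t x) (Set.Icc a x) :=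
    (continuousOn_taylorWithinEval unique_diff hf).mono (Set.Icc_subset_Icc_right hx.2)
  have taylor_deriv (t : ℝ) (ht : t ∈ Set.Ico a x) :=
    hasDerivWithinAt_Ici_taylorWithinEval x (mem_Ico ht) hf (hf' t (mem_Ico ht))
  have majorant_deriv (t : ℝ) :
      HasDerivAt (fun t ↦ C * ((x - a) ^ (n + 1) / ((n + 1).factorial : ℝ)
          - (x - t) ^ (n + 1) / ((n + 1).factorial : ℝ)))
        (C * ((x - t) ^ n / (n.factorial : ℝ))) t := by
    simpa only [neg_neg] using
      ((hasDerivAt_const_sub_pow_succ_div_factorial n x t).const_sub _).const_mul C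
  have deriv_le (t : ℝ) (ht : t ∈ Set.Ico a x) :
      ‖((n.factorial : ℝ)⁻¹ * (x - t) ^ n) • iteratedDerivWithin (n + 1) f (Set.Icc a b) t‖
        ≤ C * ((x - t) ^ n / (n.factorial : ℝ)) := by
    have : 0 ≤ x - t := sub_nonneg.2 ht.2.le
    rw [norm_smul, Real.norm_of_nonneg (by positivity), inv_mul_eq_div, mul_comm]
    gcongr
    exact hC t (mem_Ico ht)
  simpa using image_norm_le_of_norm_deriv_right_le_deriv_boundary
    (taylor_continuousOn.sub continuousOn_const) (fun t ht ↦ (taylor_deriv t ht).sub_const _)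
    (by simp) majorant_deriv deriv_le (Set.right_mem_Icc.2 hx.1)

end TaylorRemainder

section WeightedIntegral

variable {E : Type*} [NormedAddCommGroup E] [NormedSpace ℝ E] {w : ℝ → ℝ} {a b : ℝ}

theorem integral_smul_taylorWithinEval [CompleteSpace E] {μ : Measure ℝ}
    (hw : IntervalIntegrable w μ a b) (f : ℝ → E) (n : ℕ) (s : Set ℝ) (c : ℝ) :
    ∫ x in a..b, w x • taylorWithinEval f n s c x ∂μ
      = ∑ m ∈ range (n + 1), (∫ x in a..b, w x * (x - c) ^ m / (m.factorial : ℝ) ∂μ) •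
          iteratedDerivWithin m f s c := by
  have moment_integrable (m : ℕ) :
      IntervalIntegrable (fun x ↦ w x * (x - c) ^ m / (m.factorial : ℝ)) μ a b :=
    (hw.mul_continuousOn (by fun_prop)).div_const _
  simp_rw [← intervalIntegral.integral_smul_const]
  rw [← intervalIntegral.integral_finsetSum fun m _ ↦
    (moment_integrable m).smul_continuousOn continuousOn_const]
  simp_rw [taylor_within_apply, smul_sum, smul_smul, inv_mul_eq_div, mul_div_assoc]

theorem norm_integral_smul_le_of_norm_le_pow {g : ℝ → E} {C W : ℝ} {k : ℕ} (hab : a ≤ b)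
    (hw : ∀ x ∈ Set.Ioc a b, |w x| ≤ W)
    (hg : ∀ x ∈ Set.Ioc a b, ‖g x‖ ≤ C * ((x - a) ^ k / (k.factorial : ℝ))) :
    ‖∫ x in a..b, w x • g x‖ ≤ W * C * (b - a) ^ (k + 1) / ((k + 1).factorial : ℝ) := by
  have norm_le (x : ℝ) (hx : x ∈ Set.Ioc a b) :
      ‖w x • g x‖ ≤ W * (C * ((x - a) ^ k / (k.factorial : ℝ))) := by
    rw [norm_smul, Real.norm_eq_abs]
    exact mul_le_mul (hw x hx) (hg x hx) (norm_nonneg _) ((abs_nonneg _).trans (hw x hx))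
  calc ‖∫ x in a..b, w x • g x‖
      ≤ ∫ x in a..b, W * (C * ((x - a) ^ k / (k.factorial : ℝ))) :=
        intervalIntegral.norm_integral_le_of_norm_le hab (.of_forall norm_le)
          (Continuous.intervalIntegrable (by fun_prop) _ _)
    _ = W * (C * ((b - a) ^ (k + 1) / (k + 1) / (k.factorial : ℝ))) := by
        simp [intervalIntegral.integral_comp_sub_right (fun y ↦ y ^ k)]
    _ = W * C * (b - a) ^ (k + 1) / ((k + 1).factorial : ℝ) := by
        rw [Nat.factorial_succ]
        push_cast
        field_simp

theorem dpm_solver_k_truncation_error_general [CompleteSpace E] {f : ℝ → E} {C W : ℝ} {n : ℕ}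
    (hab : a ≤ b) (hw : IntervalIntegrable w volume a b) (hW : ∀ x ∈ Set.Ioc a b, |w x| ≤ W)
    (hf : ContDiffOn ℝ n f (Set.Icc a b))
    (hf' : DifferentiableOn ℝ (iteratedDerivWithin n f (Set.Icc a b)) (Set.Ico a b))
    (hC : ∀ x ∈ Set.Ico a b, ‖iteratedDerivWithin (n + 1) f (Set.Icc a b) x‖ ≤ C) :
    ‖(∫ x in a..b, w x • f x)
        - ∑ m ∈ range (n + 1), (∫ x in a..b, w x * (x - a) ^ m / (m.factorial : ℝ)) •
            iteratedDerivWithin m f (Set.Icc a b) a‖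
      ≤ W * C * (b - a) ^ (n + 2) / ((n + 2).factorial : ℝ) := by
  have f_continuousOn : ContinuousOn f (Set.uIcc a b) := Set.uIcc_of_le hab ▸ hf.continuousOn
  rw [← integral_smul_taylorWithinEval hw,
    ← intervalIntegral.integral_sub (hw.smul_continuousOn f_continuousOn)
      (hw.smul_continuousOn (continuous_taylorWithinEval f n _ a).continuousOn)]
  simp_rw [← smul_sub]
  exact norm_integral_smul_le_of_norm_le_pow hab hW fun x hx ↦
    norm_sub_taylorWithinEval_le hf hf' hC (Set.Ioc_subset_Icc_self hx)

end WeightedIntegral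

/-- Local truncation error bound underlying the DPM-solver-k: replacing `ε` in the
exponentially weighted integral by its `(k-1)`-st order Taylor polynomial at `a`
incurs an error of order `O(h^{k+1})`. -/
theorem dpm_solver_k_truncation_error
    {E : Type*} [NormedAddCommGroup E] [NormedSpace ℝ E] [CompleteSpace E]
    (k : ℕ) (hk : 1 ≤ k) (a h M : ℝ) (hh : 0 < h)
    (ε : ℝ → E) (hε : ContDiffOn ℝ k ε (Set.Icc a (a + h)))
    (hM : ∀ lam ∈ Set.Icc a (a + h),
      ‖iteratedDerivWithin k ε (Set.Icc a (a + h)) lam‖ ≤ M) :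
    ‖(∫ lam in a..(a + h), Real.exp (-lam) • ε lam)
        - ∑ n ∈ Finset.range k,
            (∫ lam in a..(a + h), Real.exp (-lam) * (lam - a) ^ n / (n.factorial : ℝ)) •
              iteratedDerivWithin n ε (Set.Icc a (a + h)) a‖
      ≤ Real.exp (-a) * M * h ^ (k + 1) / ((k + 1).factorial : ℝ) := by
  obtain ⟨n, rfl⟩ := Nat.exists_eq_add_of_le' hk
  have hab : a < a + h := lt_add_of_pos_right a hh
  have exp_le (x : ℝ) (hx : x ∈ Set.Ioc a (a + h)) : |Real.exp (-x)| ≤ Real.exp (-a) := by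
    rw [Real.abs_exp]
    exact Real.exp_le_exp.2 (neg_le_neg hx.1.le)
  have deriv_differentiableOn :
      DifferentiableOn ℝ (iteratedDerivWithin n ε (Set.Icc a (a + h))) (Set.Icc a (a + h)) :=
    hε.differentiableOn_iteratedDerivWithin (mod_cast n.lt_succ_self) (uniqueDiffOn_Icc hab)
  simpa only [add_sub_cancel_left] using dpm_solver_k_truncation_error_general hab.le
    (Continuous.intervalIntegrable (by fun_prop) _ _) exp_le (hε.of_le (mod_cast n.le_succ))
    (deriv_differentiableOn.mono Set.Ico_subset_Icc_self)
    fun x hx ↦ hM x (Set.Ico_subset_Icc_self hx)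
end

section
/- Let E be a real Banach space, α : ℝ → ℝ differentiable and strictly positive, and x : ℝ → E differentiable on [s,t] (s < t) satisfying x'(λ) = (α'(λ)/α(λ)) • x(λ) − (α(λ)e^{−λ}) • ε(λ) for all λ ∈ [s,t], where ε : ℝ → E is k-times continuously differentiable on [s,t] (k ≥ 1) with ‖ε^{(k)}(λ)‖ ≤ M on [s,t]. Set h := t − s. Then the DPM-solver-k one-step update satisfies ‖(1/α(t)) • x(t) − (1/α(s)) • x(s) + Σ_{n=0}^{k−1} (∫_{s}^{t} e^{−λ}(λ−s)^n/n! dλ) • ε^{(n)}(s)‖ ≤ e^{−s} · M · h^{k+1}/(k+1)!. -/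
open MeasureTheory intervalIntegral Finset

/-!
In the log-SNR variable, `α⁻¹` is an integrating factor for the diffusion ODE: `y = α⁻¹ • x`
satisfies `y' = -exp (-lam) • ε`. The DPM-solver update integrates this equation exactly after
replacing `ε` by its Taylor polynomial at `s`, so the derivative of the error is `-exp (-lam)`
times the Taylor remainder of `ε`, and the mean value inequality raises the order in `h` by one.
-/

section

variable {E : Type*} [NormedAddCommGroup E] [NormedSpace ℝ E]

theorem hasDerivAt_sub_pow_succ_div_factorial (a x : ℝ) (n : ℕ) :
    HasDerivAt (fun y ↦ (y - a) ^ (n + 1) / ((n + 1).factorial : ℝ))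
      ((x - a) ^ n / (n.factorial : ℝ)) x := by
  refine ((((hasDerivAt_id' x).sub_const a).fun_pow (n + 1)).div_const _).congr_deriv ?_
  rw [Nat.factorial_succ, add_tsub_cancel_right]
  push_cast
  field_simp

theorem hasDerivAt_sum_pow_div_factorial_smul (c : ℕ → E) (a x : ℝ) (k : ℕ) :
    HasDerivAt (fun y ↦ ∑ n ∈ range (k + 1), ((y - a) ^ n / (n.factorial : ℝ)) • c n)
      (∑ n ∈ range k, ((x - a) ^ n / (n.factorial : ℝ)) • c (n + 1)) x := by
  simp only [sum_range_succ', pow_zero]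
  exact (HasDerivAt.fun_sum fun n _ ↦
    (hasDerivAt_sub_pow_succ_div_factorial a x n).smul_const (c (n + 1))).add_const _

theorem norm_le_mul_pow_succ_of_norm_deriv_le {f f' : ℝ → E} {a b C : ℝ} {n : ℕ}
    (hf : ∀ x ∈ Set.Icc a b, HasDerivWithinAt f (f' x) (Set.Icc a b) x) (ha : f a = 0)
    (bound : ∀ x ∈ Set.Icc a b, ‖f' x‖ ≤ C * (x - a) ^ n / (n.factorial : ℝ)) :
    ∀ x ∈ Set.Icc a b, ‖f x‖ ≤ C * (x - a) ^ (n + 1) / ((n + 1).factorial : ℝ) := by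
  have hB (x : ℝ) : HasDerivAt (fun y ↦ C * (y - a) ^ (n + 1) / ((n + 1).factorial : ℝ))
      (C * (x - a) ^ n / (n.factorial : ℝ)) x := by
    simpa only [mul_div_assoc] using
      (hasDerivAt_sub_pow_succ_div_factorial a x n).const_mul C
  exact image_norm_le_of_norm_deriv_right_le_deriv_boundary
    (fun x hx ↦ (hf x hx).continuousWithinAt)
    (fun x hx ↦ (hf x (Set.Ico_subset_Icc_self hx)).mono_of_mem_nhdsWithin
      (Icc_mem_nhdsGE_of_mem hx))
    (by simp [ha]) hB fun x hx ↦ bound x (Set.Ico_subset_Icc_self hx)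

/- `taylor_mean_remainder_bound` has the weaker denominator `(k - 1)!`. -/
theorem norm_sub_sum_iteratedDerivWithin_le {f : ℝ → E} {a b C : ℝ} {k : ℕ} (hab : a < b)
    (hf : ContDiffOn ℝ k f (Set.Icc a b))
    (hC : ∀ x ∈ Set.Icc a b, ‖iteratedDerivWithin k f (Set.Icc a b) x‖ ≤ C) :
    ∀ x ∈ Set.Icc a b,
      ‖f x - ∑ n ∈ range k,
          ((x - a) ^ n / (n.factorial : ℝ)) • iteratedDerivWithin n f (Set.Icc a b) a‖
        ≤ C * (x - a) ^ k / (k.factorial : ℝ) := by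
  induction k generalizing f with
  | zero => simpa using hC
  | succ k ih =>
    obtain ⟨hdiff, -, hf'⟩ :=
      (contDiffOn_succ_iff_derivWithin (n := k) (uniqueDiffOn_Icc hab)).1 (mod_cast hf)
    simp only [iteratedDerivWithin_succ'] at hC
    refine norm_le_mul_pow_succ_of_norm_deriv_le
      (fun x hx ↦ (hdiff x hx).hasDerivWithinAt.sub
        (hasDerivAt_sum_pow_div_factorial_smul _ a x k).hasDerivWithinAt)
      (by simp [sum_range_succ']) ?_
    simpa only [iteratedDerivWithin_succ'] using ih hf' hC

theorem hasDerivWithinAt_integral_of_continuousOn [CompleteSpace E] {f : ℝ → E} {a b x : ℝ}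
    (hf : ContinuousOn f (Set.Icc a b)) (hx : x ∈ Set.Icc a b) :
    HasDerivWithinAt (fun u ↦ ∫ y in a..u, f y) (f x) (Set.Icc a b) x := by
  have : Fact (x ∈ Set.Icc a b) := ⟨hx⟩
  have hint : IntervalIntegrable f volume a x :=
    (hf.mono (Set.Icc_subset_Icc_right hx.2)).intervalIntegrable_of_Icc hx.1
  exact integral_hasDerivWithinAt_right hint
    (hf.stronglyMeasurableAtFilter_nhdsWithin measurableSet_Icc x) (hf x hx)

theorem norm_image_sub_sub_sum_integral_smul_le {w : ℝ → ℝ} {f y : ℝ → E} {a b C W : ℝ} {k : ℕ}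
    (hab : a < b) (hw : ContinuousOn w (Set.Icc a b)) (hW : ∀ x ∈ Set.Icc a b, ‖w x‖ ≤ W)
    (hf : ContDiffOn ℝ k f (Set.Icc a b))
    (hC : ∀ x ∈ Set.Icc a b, ‖iteratedDerivWithin k f (Set.Icc a b) x‖ ≤ C)
    (hy : ∀ x ∈ Set.Icc a b, HasDerivWithinAt y (w x • f x) (Set.Icc a b) x) :
    ‖y b - y a - ∑ n ∈ range k, (∫ x in a..b, w x * (x - a) ^ n / (n.factorial : ℝ)) •
        iteratedDerivWithin n f (Set.Icc a b) a‖
      ≤ W * C * (b - a) ^ (k + 1) / ((k + 1).factorial : ℝ) := by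
  set c : ℕ → E := fun n ↦ iteratedDerivWithin n f (Set.Icc a b) a
  have hderiv : ∀ x ∈ Set.Icc a b, HasDerivWithinAt
      (fun u ↦ y u - y a - ∑ n ∈ range k,
        (∫ x in a..u, w x * (x - a) ^ n / (n.factorial : ℝ)) • c n)
      (w x • (f x - ∑ n ∈ range k, ((x - a) ^ n / (n.factorial : ℝ)) • c n))
      (Set.Icc a b) x := by
    intro x hx
    simp only [smul_sub, smul_sum, smul_smul, ← mul_div_assoc]
    refine ((hy x hx).sub_const _).sub (HasDerivWithinAt.fun_sum fun n _ ↦ ?_)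
    exact (hasDerivWithinAt_integral_of_continuousOn (by fun_prop) hx).smul_const _
  refine norm_le_mul_pow_succ_of_norm_deriv_le hderiv (by simp) (fun x hx ↦ ?_)
    b (Set.right_mem_Icc.2 hab.le)
  have hW0 : 0 ≤ W := (norm_nonneg _).trans (hW x hx)
  calc ‖w x • (f x - ∑ n ∈ range k, ((x - a) ^ n / (n.factorial : ℝ)) • c n)‖
      = ‖w x‖ * ‖f x - ∑ n ∈ range k, ((x - a) ^ n / (n.factorial : ℝ)) • c n‖ := norm_smul _ _
    _ ≤ W * (C * (x - a) ^ k / (k.factorial : ℝ)) := by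
        gcongr
        exacts [hW x hx, norm_sub_sum_iteratedDerivWithin_le hab hf hC x hx]
    _ = W * C * (x - a) ^ k / (k.factorial : ℝ) := by ring

theorem hasDerivWithinAt_inv_smul_of_linear_ode {𝕜 F : Type*} [NontriviallyNormedField 𝕜]
    [NormedAddCommGroup F] [NormedSpace 𝕜 F] {α : 𝕜 → 𝕜} {x : 𝕜 → F} {α' t : 𝕜} {g : F}
    {S : Set 𝕜} (hα : HasDerivWithinAt α α' S t) (hα0 : α t ≠ 0)
    (hx : HasDerivWithinAt x ((α' / α t) • x t + g) S t) :
    HasDerivWithinAt (fun u ↦ (α u)⁻¹ • x u) ((α t)⁻¹ • g) S t := by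
  convert (hα.fun_inv hα0).fun_smul hx using 1
  match_scalars <;> field_simp
  ring

theorem dpm_solver_k_one_step_error_general {α α' : ℝ → ℝ} {x ε : ℝ → E} {s t M : ℝ} {k : ℕ}
    (hst : s < t)
    (hα : ∀ lam ∈ Set.Icc s t, HasDerivWithinAt α (α' lam) (Set.Icc s t) lam)
    (hα0 : ∀ lam ∈ Set.Icc s t, α lam ≠ 0)
    (hx : ∀ lam ∈ Set.Icc s t,
      HasDerivWithinAt x ((α' lam / α lam) • x lam
        - (α lam * Real.exp (-lam)) • ε lam) (Set.Icc s t) lam)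
    (hε : ContDiffOn ℝ k ε (Set.Icc s t))
    (hM : ∀ lam ∈ Set.Icc s t, ‖iteratedDerivWithin k ε (Set.Icc s t) lam‖ ≤ M) :
    ‖(1 / α t) • x t - (1 / α s) • x s
        + ∑ n ∈ range k, (∫ lam in s..t, Real.exp (-lam) * (lam - s) ^ n / (n.factorial : ℝ)) •
            iteratedDerivWithin n ε (Set.Icc s t) s‖
      ≤ Real.exp (-s) * M * (t - s) ^ (k + 1) / ((k + 1).factorial : ℝ) := by
  have hy : ∀ lam ∈ Set.Icc s t, HasDerivWithinAt (fun u ↦ (α u)⁻¹ • x u)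
      (-Real.exp (-lam) • ε lam) (Set.Icc s t) lam := by
    intro lam hlam
    have hode := hx lam hlam
    rw [sub_eq_add_neg] at hode
    convert hasDerivWithinAt_inv_smul_of_linear_ode (hα lam hlam) (hα0 lam hlam) hode using 1
    rw [smul_neg, smul_smul, inv_mul_cancel_left₀ (hα0 lam hlam), neg_smul]
  have hexp : ∀ lam ∈ Set.Icc s t, ‖-Real.exp (-lam)‖ ≤ Real.exp (-s) := by
    intro lam hlam
    simpa using hlam.1
  simpa [neg_div] using
    norm_image_sub_sub_sum_integral_smul_le hst (by fun_prop) hexp hε hM hy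

end

/-- Precise form of the DPM-solver-k one-step update (Eq. (3) of the paper): combining the
exact exponential-integrator solution formula with the `(k-1)`-st order Taylor expansion of
the denoising function `ε` at `λ = s`, the local error is `O(h^{k+1})` with `h = t - s`. -/
theorem dpm_solver_k_one_step_error
    {E : Type*} [NormedAddCommGroup E] [NormedSpace ℝ E] [CompleteSpace E]
    (α : ℝ → ℝ) (hα : Differentiable ℝ α) (hαpos : ∀ lam, 0 < α lam)
    (x : ℝ → E) (ε : ℝ → E) (s t : ℝ) (hst : s < t)
    (k : ℕ) (hk : 1 ≤ k) (M : ℝ)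
    (hx : ∀ lam ∈ Set.Icc s t,
      HasDerivAt x ((deriv α lam / α lam) • x lam
        - (α lam * Real.exp (-lam)) • ε lam) lam)
    (hε : ContDiffOn ℝ k ε (Set.Icc s t))
    (hM : ∀ lam ∈ Set.Icc s t,
      ‖iteratedDerivWithin k ε (Set.Icc s t) lam‖ ≤ M) :
    ‖(1 / α t) • x t - (1 / α s) • x s
        + ∑ n ∈ Finset.range k,
            (∫ lam in s..t, Real.exp (-lam) * (lam - s) ^ n / (n.factorial : ℝ)) •
              iteratedDerivWithin n ε (Set.Icc s t) s‖
      ≤ Real.exp (-s) * M * (t - s) ^ (k + 1) / ((k + 1).factorial : ℝ) :=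
  dpm_solver_k_one_step_error_general hst (fun lam _ ↦ (hα lam).hasDerivAt.hasDerivWithinAt)
    (fun lam _ ↦ (hαpos lam).ne') (fun lam hlam ↦ (hx lam hlam).hasDerivWithinAt) hε hM
end
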